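/- Let T = k* act on k[x_1, ..., x_n, x_{-n}] with t·x_i = t^i x_i. Then the cardinality of a minimal generating set for the invariant ring k[x_1, ..., x_n, x_{-n}]^T is O(e^{6√n · log(2n)}). -/

import Mathlib

/-!
The invariant ring is spanned by the monomials of weight zero, and is generated by the
indecomposable ones. Forgetting the exponent of `x_{-n}`, which the other exponents determine,
turns the latter into minimal zero-sum sequences over `ℤ/n`. Such a sequence has length at most
`n`, by the pigeonhole principle applied to its partial sums. Its support minus one element is a
zero-sum-free set, and these have at most `6√n + O(1)` elements, a weak form of Olson's theorem:
adding the elements of such a set one at a time, greedily, the set of subset sums grows so fast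
that it would otherwise outgrow `ℤ/n`, unless many elements lie in a proper subgroup, where one
argues by induction. By Rankin's trick, there are at most `n ^ s * exp (2√n)` vectors in `ℕⁿ` of
degree at most `n` with at most `s` nonzero entries. For `s = 6√n + O(1)` the factor `n ^ O(1) *
exp (2√n)` is absorbed by passing from `n ^ (6√n)` to `(2n) ^ (6√n)`.
-/

open MvPolynomial

variable (k : Type) [Field k]

/-- The action of `t ∈ k* = 𝔾ₘ` on a polynomial ring in which the variable `x_i` has
weight `w i`: the substitution `x_i ↦ t^{w i} x_i`. -/
noncomputable def torusAct {ι : Type} (w : ι → ℤ) (t : kˣ) :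
    MvPolynomial ι k →ₐ[k] MvPolynomial ι k :=
  aeval (fun i => ((t ^ w i : kˣ) : k) • X i)

/-- The ring of invariants of the torus `k*` acting on a polynomial ring with the
variable `x_i` of weight `w i`. -/
noncomputable def torusInv {ι : Type} (w : ι → ℤ) : Subalgebra k (MvPolynomial ι k) where
  carrier := {p | ∀ t : kˣ, torusAct k w t p = p}
  mul_mem' := by intro a b ha hb t; rw [map_mul, ha t, hb t]
  add_mem' := by intro a b ha hb t; rw [map_add, ha t, hb t]
  algebraMap_mem' := by intro r t; exact (torusAct k w t).commutes r

/-- The minimal cardinality of a (finite) generating set of a subalgebra. -/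
noncomputable def minGens {R : Type} [CommRing R] [Algebra k R] (A : Subalgebra k R) : ℕ :=
  sInf {c : ℕ | ∃ S : Finset R, S.card = c ∧ Algebra.adjoin k (S : Set R) = A}

/-- The weight function for the variables `x_1, …, x_n, x_{-n}`: the variable `x_i`
(encoded `some i`) has weight `i + 1 ∈ {1, …, n}`, and `x_{-n}` (encoded `none`) has
weight `-n`. -/
def wOpt (n : ℕ) : Option (Fin n) → ℤ :=
  fun o => Option.elim o (-(n : ℤ)) (fun i => (i : ℤ) + 1)

section Translates

open Finset
open scoped Pointwise

variable {G : Type*} [AddCommGroup G] [DecidableEq G]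

/-- Olson's `λ_B(x) = |(x + B) \ B|`, the number of elements that a set of subset sums `B` gains
when `x` becomes available as a further summand. -/
def translateExcess (B : Finset G) (x : G) : ℕ := #((x +ᵥ B) \ B)

lemma translateExcess_zero (B : Finset G) : translateExcess B 0 = 0 := by
  simp [translateExcess]

lemma translateExcess_le_card (B : Finset G) (x : G) : translateExcess B x ≤ #B :=
  (card_le_card sdiff_subset).trans_eq (card_vadd_finset x B)

lemma translateExcess_add_le (B : Finset G) (x y : G) :
    translateExcess B (x + y) ≤ translateExcess B x + translateExcess B y :=
  calc #(((x + y) +ᵥ B) \ B)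
    _ ≤ #((((x + y) +ᵥ B) \ (x +ᵥ B)) ∪ ((x +ᵥ B) \ B)) := card_le_card (sdiff_triangle _ _ _)
    _ ≤ #(((x + y) +ᵥ B) \ (x +ᵥ B)) + #((x +ᵥ B) \ B) := card_union_le _ _
    _ = translateExcess B x + translateExcess B y := by
      rw [add_vadd, ← vadd_finset_sdiff, card_vadd_finset, add_comm, translateExcess,
        translateExcess]

lemma translateExcess_neg (B : Finset G) (x : G) :
    translateExcess B (-x) = translateExcess B x := by
  rw [translateExcess, ← card_vadd_finset x, vadd_finset_sdiff, vadd_neg_vadd]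
  exact card_sdiff_comm (card_vadd_finset x B).symm

lemma translateExcess_le_of_mem_nsmul {B X : Finset G} {m : ℕ}
    (h : ∀ x ∈ X, translateExcess B x ≤ m) (j : ℕ) {y : G} (hy : y ∈ j • X) :
    translateExcess B y ≤ j * m := by
  induction j generalizing y with
  | zero =>
    obtain rfl : y = 0 := by simpa using hy
    simp [translateExcess_zero]
  | succ j ih =>
    rw [succ_nsmul, mem_add] at hy
    obtain ⟨a, ha, b, hb, rfl⟩ := hy
    calc translateExcess B (a + b)
      _ ≤ translateExcess B a + translateExcess B b := translateExcess_add_le B a b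
      _ ≤ j * m + m := add_le_add (ih ha) (h b hb)
      _ = (j + 1) * m := by ring

lemma card_mul_card_le_add_sum_translateExcess (B Y : Finset G) :
    #Y * #B ≤ #B * #B + ∑ y ∈ Y, translateExcess B y := by
  have inter_le : ∑ y ∈ Y, #(B ∩ (y +ᵥ B)) ≤ #B * #B := by
    simp_rw [card_inter_vadd, addConvolution, sum_card_fiberwise_eq_card_filter]
    exact (card_filter_le _ _).trans_eq (by rw [card_product, card_neg])
  have split (y : G) : #B = #(B ∩ (y +ᵥ B)) + translateExcess B y := by
    rw [translateExcess, inter_comm, card_inter_add_card_sdiff, card_vadd_finset]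
  calc #Y * #B = ∑ y ∈ Y, (#(B ∩ (y +ᵥ B)) + translateExcess B y) := by simp [← split]
    _ ≤ #B * #B + ∑ y ∈ Y, translateExcess B y := by grw [sum_add_distrib, inter_le]

/-- A new element `y` of the `(j + 2)`-fold sumset lies outside the `(j + 1)`-fold one, so its
translate `y + X` misses the `j`-fold sumset: three more summands gain `#X` elements. -/
lemma card_nsmul_add_card_le_card_nsmul {X : Finset G} (zero_mem : (0 : G) ∈ X) (neg_eq : -X = X)
    {j : ℕ} (h : (j + 1) • X ⊂ (j + 2) • X) : #(j • X) + #X ≤ #((j + 3) • X) := by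
  obtain ⟨y, hy, hy'⟩ := exists_of_ssubset h
  have disj : Disjoint (j • X) (y +ᵥ X) := by
    refine disjoint_left.2 fun z hz hz' ↦ hy' ?_
    obtain ⟨x, hx, rfl⟩ := mem_vadd_finset.1 hz'
    rw [← neg_eq, mem_neg'] at hx
    simpa [succ_nsmul] using add_mem_add hz hx
  rw [← card_vadd_finset y X, ← card_union_of_disjoint disj]
  refine card_le_card (union_subset (nsmul_subset_nsmul_right zero_mem (by lia)) ?_)
  rw [succ_nsmul]
  exact vadd_finset_subset_add hy

lemma nsmul_eq_univ_or_mul_card_le_card_nsmul [Fintype G] {X : Finset G}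
    (zero_mem : (0 : G) ∈ X) (neg_eq : -X = X)
    (closure_eq : AddSubgroup.closure (X : Set G) = ⊤) (j : ℕ) :
    (3 * j + 1) • X = univ ∨ (j + 1) * #X ≤ #((3 * j + 1) • X) := by
  obtain rfl | nontrivial := eq_singleton_or_nontrivial zero_mem
  · refine .inl (eq_univ_of_forall fun g ↦ ?_)
    have hg : g ∈ AddSubgroup.closure (({0} : Finset G) : Set G) :=
      closure_eq ▸ AddSubgroup.mem_top g
    obtain rfl : g = 0 := by simpa [AddSubgroup.closure_singleton_zero] using hg
    simp
  induction j with
  | zero => right; simp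
  | succ j ih =>
    refine or_iff_not_imp_left.2 fun hne ↦ ?_
    have ne_univ {i : ℕ} (hi : i ≤ 3 * (j + 1) + 1) : i • X ≠ univ := fun h ↦
      hne (univ_subset_iff.1 (h ▸ nsmul_subset_nsmul_right zero_mem hi))
    have grows : (3 * j + 2) • X ⊂ (3 * j + 3) • X := by
      refine nsmul_ssubset_nsmul_succ_of_nsmul_ne_closure zero_mem nontrivial ?_
      rw [closure_eq, AddSubgroup.coe_top]
      exact_mod_cast ne_univ (by lia)
    calc (j + 1 + 1) * #X = (j + 1) * #X + #X := by ring
      _ ≤ #((3 * j + 1) • X) + #X := by grw [ih.resolve_left (ne_univ (by lia))]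
      _ ≤ #((3 * (j + 1) + 1) • X) := card_nsmul_add_card_le_card_nsmul zero_mem neg_eq grows

lemma card_mul_card_le_of_translateExcess_le [Fintype G] {B X : Finset G} {m : ℕ}
    (zero_mem : (0 : G) ∈ X) (neg_eq : -X = X)
    (closure_eq : AddSubgroup.closure (X : Set G) = ⊤)
    (hB : 2 * #B ≤ Fintype.card G) (hm : ∀ x ∈ X, translateExcess B x ≤ m) :
    #B * #X ≤ (12 * #B + 2 * #X) * m := by
  obtain rfl | hBne := B.eq_empty_or_nonempty
  · simp
  set J := 2 * #B / #X with hJ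
  set Y := (3 * J + 1) • X with hY
  have two_mul_card_le : 2 * #B ≤ #Y := by
    obtain h | h :=
      nsmul_eq_univ_or_mul_card_le_card_nsmul zero_mem neg_eq closure_eq J
    · rwa [hY, h, card_univ]
    · have := Nat.lt_div_mul_add (card_pos.2 ⟨0, zero_mem⟩) (a := 2 * #B)
      rw [← hJ] at this
      lia
  have sum_le : ∑ y ∈ Y, translateExcess B y ≤ #Y * ((3 * J + 1) * m) :=
    sum_le_card_nsmul _ _ _ fun y ↦ translateExcess_le_of_mem_nsmul hm _
  have card_le : #B ≤ 2 * ((3 * J + 1) * m) := by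
    have average := card_mul_card_le_add_sum_translateExcess B Y
    have := hBne.card_pos
    by_contra!
    nlinarith
  have mul_card_le : J * #X ≤ 2 * #B := Nat.div_mul_le_self _ _
  calc #B * #X ≤ 2 * ((3 * J + 1) * m) * #X := by gcongr
    _ = (6 * (J * #X) + 2 * #X) * m := by ring
    _ ≤ (6 * (2 * #B) + 2 * #X) * m := by grw [mul_card_le]
    _ = (12 * #B + 2 * #X) * m := by ring

end Translates

section ZeroSumFree

open Finset
open scoped Pointwise

variable {G : Type*} [AddCommGroup G]

/-- A finite set is zero-sum-free if none of its nonempty subsets has sum zero. These are the sets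
bounded by Olson's theorem. -/
def ZeroSumFree {M : Type*} [AddCommMonoid M] (S : Finset M) : Prop :=
  ∀ T ⊆ S, T.Nonempty → ∑ x ∈ T, x ≠ 0

namespace ZeroSumFree

lemma mono {M : Type*} [AddCommMonoid M] {S T : Finset M} (hS : ZeroSumFree S) (h : T ⊆ S) :
    ZeroSumFree T :=
  fun U hU ↦ hS U (hU.trans h)

lemma zero_notMem {M : Type*} [AddCommMonoid M] {S : Finset M} (hS : ZeroSumFree S) :
    (0 : M) ∉ S :=
  fun h ↦ hS {0} (singleton_subset_iff.2 h) (singleton_nonempty 0) (sum_singleton _ _)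

lemma subtype {M σ : Type*} [AddCommMonoid M] [SetLike σ M] [AddSubmonoidClass σ M] {S : Finset M}
    (hS : ZeroSumFree S) (K : σ) [DecidablePred (· ∈ K)] : ZeroSumFree (S.subtype (· ∈ K)) := by
  intro T hT hne hsum
  refine hS (T.map (Function.Embedding.subtype _)) ?_ hne.map ?_
  · intro x hx
    obtain ⟨y, hy, rfl⟩ := mem_map.1 hx
    exact mem_subtype.1 (hT hy)
  · simpa using congrArg Subtype.val hsum

variable [DecidableEq G]

lemma two_nsmul_eq_zero_of_mem_inter_neg {S : Finset G} (hS : ZeroSumFree S) {x : G}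
    (hx : x ∈ S ∩ -S) : 2 • x = 0 := by
  obtain ⟨mem, neg_mem⟩ := mem_inter.1 hx
  rw [mem_neg'] at neg_mem
  by_contra hne
  have ne_neg : x ≠ -x := fun h ↦ hne (by rw [two_nsmul, add_eq_zero_iff_eq_neg, ← h])
  exact hS {x, -x} (by simp [insert_subset_iff, mem, neg_mem]) (by simp)
    (by rw [sum_pair ne_neg, add_neg_cancel])

/-- A cyclic group has at most one involution, whose loss is made up for by the element `0`. -/
lemma two_mul_card_le_card_insert_zero_union_neg [Finite G] [IsAddCyclic G] {S : Finset G}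
    (hS : ZeroSumFree S) : 2 * #S ≤ #(insert 0 (S ∪ -S)) := by
  cases nonempty_fintype G
  have zero_notMem_inter : (0 : G) ∉ S ∩ -S := fun h ↦ hS.zero_notMem (mem_inter.1 h).1
  have inter_card : #(S ∩ -S) + 1 ≤ 2 := by
    rw [← card_insert_of_notMem zero_notMem_inter]
    refine (card_le_card fun x hx ↦ ?_).trans (IsAddCyclic.card_nsmul_eq_zero_le (α := G) two_pos)
    obtain rfl | hx := mem_insert.1 hx
    · simp
    · simpa using hS.two_nsmul_eq_zero_of_mem_inter_neg hx
  have zero_notMem_union : (0 : G) ∉ S ∪ -S := by simp [hS.zero_notMem]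
  have := card_union_add_card_inter S (-S)
  rw [card_neg] at this
  rw [card_insert_of_notMem zero_notMem_union]
  lia

lemma exists_card_mul_card_le_mul_translateExcess [Fintype G] [IsAddCyclic G] {U B : Finset G}
    (hU : ZeroSumFree U) (nonempty : U.Nonempty)
    (closure_eq : AddSubgroup.closure (U : Set G) = ⊤) (hB : 2 * #B ≤ Fintype.card G) :
    ∃ x ∈ U, #B * #U ≤ (6 * #B + 2 * #U) * translateExcess B x := by
  obtain ⟨x, hx, hmax⟩ := exists_max_image U (translateExcess B) nonempty
  refine ⟨x, hx, ?_⟩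
  set m := translateExcess B x
  set X : Finset G := insert 0 (U ∪ -U)
  have excess_le : ∀ y ∈ X, translateExcess B y ≤ m := by
    intro y hy
    obtain rfl | hy : y = 0 ∨ y ∈ U ∪ -U := mem_insert.1 hy
    · simp [translateExcess_zero]
    obtain hy | hy := mem_union.1 hy
    · exact hmax y hy
    · rw [← translateExcess_neg]
      exact hmax (-y) (mem_neg'.1 hy)
  have closure_X : AddSubgroup.closure (X : Set G) = ⊤ :=
    top_le_iff.1 (closure_eq ▸ AddSubgroup.closure_mono
      (coe_subset.2 (subset_union_left.trans (subset_insert _ _))))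
  have neg_X : -X = X := by
    ext y
    simp [X, or_comm]
  have bound := card_mul_card_le_of_translateExcess_le (mem_insert_self _ _) neg_X closure_X hB
    excess_le
  have card_X : 2 * #U ≤ #X := hU.two_mul_card_le_card_insert_zero_union_neg
  obtain h | h := le_total #B (2 * m)
  · nlinarith
  · obtain ⟨d, hd⟩ := Nat.exists_eq_add_of_le h
    rw [hd] at bound ⊢
    nlinarith

end ZeroSumFree

lemma card_subsetSum_insert [DecidableEq G] {T : Finset G} {x : G} (hx : x ∉ T) :
    #(insert x T).subsetSum = #T.subsetSum + translateExcess T.subsetSum x := by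
  have : (insert x T).subsetSum = T.subsetSum ∪ (x +ᵥ T.subsetSum) := by
    refine Subset.antisymm (fun y hy ↦ ?_) (union_subset (subsetSum_mono (subset_insert _ _))
      (vadd_finset_subsetSum_subset_subsetSum_insert hx))
    obtain ⟨A, hA, rfl⟩ := mem_subsetSum_iff.1 hy
    by_cases hxA : x ∈ A
    · rw [← add_sum_erase A (fun b ↦ b) hxA]
      exact mem_union_right _ (vadd_mem_vadd_finset (mem_subsetSum_iff.2
        ⟨A.erase x, by rwa [← subset_insert_iff], rfl⟩))
    · exact mem_union_left _ (mem_subsetSum_iff.2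
        ⟨A, (subset_insert_iff_of_notMem hxA).1 hA, rfl⟩)
  rw [this, translateExcess, add_comm, card_sdiff_add_card, union_comm]

lemma exists_subset_sum_eq_of_card_lt [Fintype G] [DecidableEq G] {T₁ T₂ : Finset G}
    (hT : Disjoint T₁ T₂) (hcard : Fintype.card G < #T₁.subsetSum + #T₂.subsetSum) (g : G) :
    ∃ A ⊆ T₁ ∪ T₂, ∑ x ∈ A, x = g := by
  have : (T₁.subsetSum ∩ (g +ᵥ -T₂.subsetSum)).Nonempty :=
    inter_nonempty_of_card_lt_card_add_card (subset_univ _) (subset_univ _)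
      (by rwa [card_vadd_finset, card_neg, card_univ])
  obtain ⟨a, ha⟩ := this
  obtain ⟨ha₁, ha₂⟩ := mem_inter.1 ha
  obtain ⟨b, hb, rfl⟩ := mem_vadd_finset.1 ha₂
  rw [mem_neg'] at hb
  obtain ⟨A₁, hA₁, hsum₁⟩ := mem_subsetSum_iff.1 ha₁
  obtain ⟨A₂, hA₂, hsum₂⟩ := mem_subsetSum_iff.1 hb
  refine ⟨A₁ ∪ A₂, union_subset_union hA₁ hA₂, ?_⟩
  rw [sum_union (hT.mono hA₁ hA₂), hsum₁, hsum₂]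
  simp

lemma ZeroSumFree.card_subsetSum_add_card_subsetSum_le [Fintype G] [DecidableEq G]
    {S T₁ T₂ : Finset G} (hS : ZeroSumFree S) (hT : Disjoint T₁ T₂) (h : T₁ ∪ T₂ ⊂ S) :
    #T₁.subsetSum + #T₂.subsetSum ≤ Fintype.card G := by
  obtain ⟨x, hx, hx'⟩ := exists_of_ssubset h
  by_contra! hcard
  obtain ⟨A, hA, hsum⟩ := exists_subset_sum_eq_of_card_lt hT hcard (-x)
  refine hS (insert x A) (insert_subset hx (hA.trans h.subset)) (insert_nonempty _ _) ?_
  rw [sum_insert fun h ↦ hx' (hA h), hsum, add_neg_cancel]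

end ZeroSumFree

section WeakOlson

open Finset

lemma log_le_mul_sqrt_add {ε x : ℝ} (hε : 0 < ε) (hx : 0 < x) :
    Real.log x ≤ ε * √x + (2 * Real.log (2 / ε) - 2) := by
  have key : Real.log (ε / 2 * √x) ≤ ε / 2 * √x - 1 :=
    Real.log_le_sub_one_of_pos (by positivity)
  have sqrt_pos : 0 < √x := Real.sqrt_pos.2 hx
  rw [Real.log_mul (by positivity) sqrt_pos.ne', Real.log_sqrt hx.le] at key
  have : Real.log (2 / ε) = -Real.log (ε / 2) := by rw [← Real.log_inv, inv_div]
  linarith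

lemma log_add_div_two_mul_le_log_add {b l : ℝ} (hb : 0 < b) (hl : 0 ≤ l) (hlb : l ≤ b) :
    Real.log b + l / (2 * b) ≤ Real.log (b + l) := by
  have key : 1 - ((b + l) / b)⁻¹ ≤ Real.log ((b + l) / b) :=
    Real.one_sub_inv_le_log_of_pos (by positivity)
  have : l / (2 * b) ≤ 1 - ((b + l) / b)⁻¹ :=
    calc l / (2 * b) ≤ l / (b + l) := by gcongr; linarith
      _ = 1 - ((b + l) / b)⁻¹ := by field_simp; ring
  rw [Real.log_div (by positivity) hb.ne'] at key
  linarith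

lemma potential_add_one_le {b l u : ℝ} (hb : 0 < b) (hl : 0 ≤ l) (hlb : l ≤ b) (hu : 0 < u)
    (gain : b * u ≤ (6 * b + 2 * u) * l) :
    6 * b / u + 4 * Real.log b + 1 ≤ 6 * (b + l) / u + 4 * Real.log (b + l) := by
  have one_le : 1 ≤ 6 * l / u + 2 * l / b :=
    calc 1 ≤ (6 * b + 2 * u) * l / (b * u) := (one_le_div (by positivity)).2 gain
      _ = 6 * l / u + 2 * l / b := by field_simp
  calc 6 * b / u + 4 * Real.log b + 1
    _ ≤ (6 * b / u + 4 * Real.log b) + (6 * l / u + 2 * l / b) := by gcongr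
    _ = 6 * (b + l) / u + 4 * (Real.log b + l / (2 * b)) := by field_simp; ring
    _ ≤ 6 * (b + l) / u + 4 * Real.log (b + l) := by
      gcongr; exact log_add_div_two_mul_le_log_add hb hl hlb

/-- Greedy choice: as long as `b = #T.subsetSum` is at most `|G| / 2`, some element can be adjoined
to `T` that increases the potential `6 b / u + 4 log b` by at least one. -/
lemma ZeroSumFree.exists_subset_potential {G : Type*} [AddCommGroup G] [DecidableEq G] [Fintype G]
    [IsAddCyclic G] {S : Finset G} (hS : ZeroSumFree S) {u : ℕ} (hu : 0 < u)
    (closure_eq : ∀ V ⊆ S, #V = u → AddSubgroup.closure (V : Set G) = ⊤) {r : ℕ}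
    (hr : r + u ≤ #S) :
    ∃ T ⊆ S, #T ≤ r ∧ (Fintype.card G < 2 * #T.subsetSum ∨
      (r : ℝ) ≤ 6 * #T.subsetSum / u + 4 * Real.log #T.subsetSum) := by
  induction r with
  | zero =>
    refine ⟨∅, empty_subset _, by simp, .inr ?_⟩
    have : 0 ≤ Real.log #(∅ : Finset G).subsetSum := Real.log_natCast_nonneg _
    rw [Nat.cast_zero]
    positivity
  | succ r ih =>
    obtain ⟨T, hTS, hTr, hT⟩ := ih (by lia)
    by_cases hlarge : Fintype.card G < 2 * #T.subsetSum
    · exact ⟨T, hTS, hTr.trans r.le_succ, .inl hlarge⟩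
    have := le_card_sdiff T S
    obtain ⟨U, hU, rfl⟩ := exists_subset_card_eq (show u ≤ #(S \ T) by lia)
    have hUS : U ⊆ S := hU.trans sdiff_subset
    obtain ⟨x, hx, gain⟩ := (hS.mono hUS).exists_card_mul_card_le_mul_translateExcess
      (card_pos.1 hu) (closure_eq U hUS rfl) (not_lt.1 hlarge)
    have hxT : x ∉ T := (mem_sdiff.1 (hU hx)).2
    refine ⟨insert x T, insert_subset (hUS hx) hTS, by grw [card_insert_le, hTr], .inr ?_⟩
    have subsetSum_pos : 0 < #T.subsetSum := card_pos.2 subsetSum_nonempty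
    rw [card_subsetSum_insert hxT, Nat.cast_succ, Nat.cast_add]
    refine (add_le_add_left (hT.resolve_left hlarge) 1).trans (potential_add_one_le ?_ ?_ ?_ ?_ ?_)
    · exact_mod_cast subsetSum_pos
    · positivity
    · exact_mod_cast translateExcess_le_card _ _
    · exact_mod_cast hu
    · exact_mod_cast gain

/-- Two disjoint subsets with more than `|G| / 2` subset sums each cannot coexist. -/
lemma ZeroSumFree.le_three_mul_card_div_add_log {G : Type*} [AddCommGroup G] [Fintype G]
    [IsAddCyclic G] {S : Finset G} (hS : ZeroSumFree S) {u : ℕ} (hu : 0 < u)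
    (closure_eq : ∀ V ⊆ S, #V = u → AddSubgroup.closure (V : Set G) = ⊤) {r : ℕ}
    (hr : 2 * r + u ≤ #S) :
    (r : ℝ) ≤ 3 * Fintype.card G / u + 4 * Real.log (Fintype.card G) := by
  classical
  by_contra! hlt
  have exists_large {A : Finset G} (hA : A ⊆ S) (hrA : r + u ≤ #A) :
      ∃ T ⊆ A, #T ≤ r ∧ Fintype.card G < 2 * #T.subsetSum := by
    obtain ⟨T, hTA, hTr, hT⟩ := (hS.mono hA).exists_subset_potential hu
      (fun V hV ↦ closure_eq V (hV.trans hA)) hrA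
    refine ⟨T, hTA, hTr, by_contra fun hsmall ↦ hlt.not_ge ?_⟩
    have two_mul_le : (2 * #T.subsetSum : ℝ) ≤ Fintype.card G := by
      exact_mod_cast not_lt.1 hsmall
    have subsetSum_pos : (0 : ℝ) < #T.subsetSum := by
      exact_mod_cast card_pos.2 subsetSum_nonempty
    calc (r : ℝ) ≤ 3 * (2 * #T.subsetSum) / u + 4 * Real.log #T.subsetSum := by
          convert hT.resolve_left hsmall using 3; ring
      _ ≤ 3 * Fintype.card G / u + 4 * Real.log (Fintype.card G) := by
          gcongr; linarith
  obtain ⟨T₁, hT₁, hr₁, hlarge₁⟩ := exists_large Subset.rfl (by lia)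
  have := le_card_sdiff T₁ S
  obtain ⟨T₂, hT₂, hr₂, hlarge₂⟩ := exists_large (A := S \ T₁) sdiff_subset (by lia)
  have union_ssubset : T₁ ∪ T₂ ⊂ S := by
    refine (union_subset hT₁ (hT₂.trans sdiff_subset)).ssubset_of_ne fun h ↦ ?_
    have := card_union_le T₁ T₂
    rw [h] at this
    lia
  have := hS.card_subsetSum_add_card_subsetSum_le
    (disjoint_of_subset_right hT₂ disjoint_sdiff) union_ssubset
  lia

lemma two_mul_natCard_le_natCard {G : Type*} [AddGroup G] [Finite G] {K : AddSubgroup G}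
    (hK : K ≠ ⊤) : 2 * Nat.card K ≤ Nat.card G := by
  rw [← K.card_mul_index, mul_comm]
  exact Nat.mul_le_mul_left _ (AddSubgroup.one_lt_index_of_ne_top hK)

lemma ZeroSumFree.card_le_add_of_forall_subset {G : Type*} [AddCommGroup G] [Finite G]
    [IsAddCyclic G] {S : Finset G} (hS : ZeroSumFree S) {M : ℝ} (hM : 0 < M)
    (h : ∀ K : AddSubgroup G, K ≠ ⊤ → ∀ V ⊆ S, (V : Set G) ⊆ K → #V ≤ M) :
    #S ≤ M + 6 * Nat.card G / M + 8 * Real.log (Nat.card G) + 2 := by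
  cases nonempty_fintype G
  set u := ⌊M⌋₊ + 1 with hu
  have lt_u : M < u := by exact_mod_cast Nat.lt_floor_add_one M
  have u_le : (u : ℝ) ≤ M + 1 := by
    rw [hu, Nat.cast_succ]
    gcongr
    exact Nat.floor_le hM.le
  have closure_eq : ∀ V ⊆ S, #V = u → AddSubgroup.closure (V : Set G) = ⊤ := by
    intro V hV hVu
    by_contra hne
    have := h _ hne V hV AddSubgroup.subset_closure
    rw [hVu] at this
    linarith
  have log_nonneg : 0 ≤ Real.log (Nat.card G) := Real.log_natCast_nonneg _
  obtain hlt | hle := lt_or_ge #S u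
  · have : (#S : ℝ) < u := by exact_mod_cast hlt
    have : 0 ≤ 6 * Nat.card G / M := by positivity
    linarith
  have hr := hS.le_three_mul_card_div_add_log (Nat.succ_pos _) closure_eq (r := (#S - u) / 2)
    (by lia)
  have card_le : (#S : ℝ) ≤ 2 * ((#S - u) / 2 : ℕ) + u + 1 := by
    exact_mod_cast (by lia : #S ≤ 2 * ((#S - u) / 2) + u + 1)
  rw [← Nat.card_eq_fintype_card] at hr
  have div_le : 3 * (Nat.card G : ℝ) / u ≤ 3 * Nat.card G / M := by gcongr
  calc (#S : ℝ) ≤ 2 * (3 * Nat.card G / M + 4 * Real.log (Nat.card G)) + (M + 1) + 1 := by linarith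
    _ = M + 6 * Nat.card G / M + 8 * Real.log (Nat.card G) + 2 := by ring

lemma exists_nonneg_forall_log_le_sqrt :
    ∃ c : ℝ, 0 ≤ c ∧ ∀ x : ℝ, c < x → 8 * Real.log x + 2 ≤ 1 / 3 * √x := by
  obtain ⟨C, hC⟩ : ∃ C : ℝ, ∀ x : ℝ, 0 < x → Real.log x ≤ 1 / 120 * √x + C :=
    ⟨_, fun x hx ↦ log_le_mul_sqrt_add (by norm_num) hx⟩
  refine ⟨(30 * C + 8) ^ 2, sq_nonneg _, fun x hx ↦ ?_⟩
  have log_le := hC x ((sq_nonneg _).trans_lt hx)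
  have : 30 * C + 8 < √x := Real.lt_sqrt_of_sq_lt hx
  linarith

lemma ZeroSumFree.card_le_six_mul_sqrt_add_of_forall_subset {G : Type*} [AddCommGroup G] [Finite G]
    [IsAddCyclic G] {S : Finset G} (hS : ZeroSumFree S) {c : ℝ} (c_nonneg : 0 ≤ c)
    (log_le : 8 * Real.log (Nat.card G) + 2 ≤ 1 / 3 * √(Nat.card G))
    (h : ∀ K : AddSubgroup G, K ≠ ⊤ → ∀ V ⊆ S, (V : Set G) ⊆ K → #V ≤ 6 * √(Nat.card G / 2) + c) :
    #S ≤ 6 * √(Nat.card G) + c := by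
  set N : ℝ := (Nat.card G : ℝ)
  set s := √(N / 2) with hs
  have N_pos : 0 < N := Nat.cast_pos.2 Nat.card_pos
  have s_pos : 0 < s := by positivity
  have two_mul_sq : 2 * s ^ 2 = N := by rw [hs, Real.sq_sqrt (by positivity)]; ring
  have bound := hS.card_le_add_of_forall_subset (by positivity) h
  have div_le : 6 * N / (6 * s + c) ≤ 2 * s :=
    calc 6 * N / (6 * s + c) ≤ 6 * N / (6 * s) := by gcongr; linarith
      _ = 2 * s := by rw [← two_mul_sq]; field_simp
  have s_le : 24 / 17 * s ≤ √N := Real.le_sqrt_of_sq_le (by rw [← two_mul_sq]; nlinarith)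
  linarith

/-- A weak form of Olson's theorem. -/
theorem exists_forall_zeroSumFree_card_le :
    ∃ c : ℝ, 0 ≤ c ∧ ∀ (G : Type*) [AddCommGroup G] [Finite G] [IsAddCyclic G] (S : Finset G),
      ZeroSumFree S → #S ≤ 6 * √(Nat.card G) + c := by
  obtain ⟨c, c_nonneg, log_le⟩ := exists_nonneg_forall_log_le_sqrt
  refine ⟨c, c_nonneg, fun G _ _ _ S hS ↦ ?_⟩
  induction hN : Nat.card G using Nat.strong_induction_on generalizing G with
  | _ N ih =>
  subst hN
  obtain hsmall | hlarge := le_or_gt (Nat.card G : ℝ) c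
  · cases nonempty_fintype G
    calc (#S : ℝ) ≤ Nat.card G := by
          exact_mod_cast (card_le_univ S).trans_eq Nat.card_eq_fintype_card.symm
      _ ≤ 6 * √(Nat.card G) + c := by linarith [Real.sqrt_nonneg (Nat.card G)]
  refine hS.card_le_six_mul_sqrt_add_of_forall_subset c_nonneg (log_le _ hlarge)
    fun K hK V hV hVK ↦ ?_
  classical
  have two_mul_card_le : 2 * Nat.card K ≤ Nat.card G := two_mul_natCard_le_natCard hK
  have K_pos : 0 < Nat.card K := Nat.card_pos
  have mem_K : ∀ x ∈ V, x ∈ K := fun _ hx ↦ hVK hx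
  calc (#V : ℝ) = #(V.subtype (· ∈ K)) := by rw [card_subtype, filter_true_of_mem mem_K]
    _ ≤ 6 * √(Nat.card K) + c :=
        ih (Nat.card K) (by lia) K _ inferInstance inferInstance _ ((hS.mono hV).subtype K) rfl
    _ ≤ 6 * √(Nat.card G / 2) + c := by
        gcongr
        rw [le_div_iff₀' two_pos]
        exact_mod_cast two_mul_card_le

end WeakOlson

section MinimalZeroSums

open Finset

/-- The minimal zero-sum sequences over the family `g`: the minimal nonzero multiplicity vectors `a`
with `∑ i, a i • g i = 0`. For a family of integer weights these are the exponent vectors of the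
indecomposable invariant monomials. -/
def minimalZeroSums {ι M : Type*} [AddCommMonoid M] (g : ι → M) : Set (ι →₀ ℕ) :=
  {a | Minimal (fun b ↦ b ≠ 0 ∧ Finsupp.weight g b = 0) a}

variable {ι M : Type*} [AddCommMonoid M]

lemma mem_minimalZeroSums {g : ι → M} {a : ι →₀ ℕ} :
    a ∈ minimalZeroSums g ↔ Minimal (fun b ↦ b ≠ 0 ∧ Finsupp.weight g b = 0) a := Iff.rfl

lemma finite_minimalZeroSums [Finite ι] (g : ι → M) : (minimalZeroSums g).Finite :=
  WellQuasiOrderedLE.finite_of_isAntichain (setOfPred_minimal_antichain _)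

lemma map_weight {N : Type*} [AddCommMonoid N] (f : M →+ N) (g : ι → M) (a : ι →₀ ℕ) :
    f (Finsupp.weight g a) = Finsupp.weight (f ∘ g) a := by
  simp [Finsupp.weight_apply, map_finsuppSum]

lemma exists_monotone_degree_eq (a : ι →₀ ℕ) :
    ∃ b : ℕ → ι →₀ ℕ, Monotone b ∧ (∀ i, b i ≤ a) ∧ ∀ i ≤ a.degree, (b i).degree = i := by
  classical
  obtain ⟨l, hl : (l : Multiset ι) = Finsupp.toMultiset a⟩ :=
    Quot.exists_rep (Finsupp.toMultiset a)
  have length_eq : l.length = a.degree :=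
    (congrArg Multiset.card hl).trans (Finsupp.card_toMultiset a)
  have toFinsupp_mono : Monotone (Multiset.toFinsupp (α := ι)) :=
    Multiset.toFinsupp_strictMono.monotone
  refine ⟨fun i ↦ Multiset.toFinsupp (l.take i : Multiset ι), fun i j hij ↦ ?_, fun i ↦ ?_,
    fun i hi ↦ ?_⟩
  · exact toFinsupp_mono (Multiset.coe_le.2 (List.take_sublist_take_left hij).subperm)
  · rw [← Finsupp.toMultiset_toFinsupp a, ← hl]
    exact toFinsupp_mono (Multiset.coe_le.2 (List.take_sublist i l).subperm)
  · refine (Multiset.toFinsupp_sum_eq (l.take i : Multiset ι)).trans ?_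
    simpa [length_eq] using hi

lemma degree_le_natCard_of_mem_minimalZeroSums {G : Type*} [AddCommGroup G] [Finite G] {g : ι → G}
    {a : ι →₀ ℕ} (ha : a ∈ minimalZeroSums g) : a.degree ≤ Nat.card G := by
  by_contra! hlt
  obtain ⟨b, mono, le_a, degree_eq⟩ := exists_monotone_degree_eq a
  cases nonempty_fintype G
  obtain ⟨i, hi, j, hj, hne, heq⟩ := exists_ne_map_eq_of_card_lt_of_maps_to
    (s := range (Nat.card G + 1)) (t := (univ : Finset G)) (f := fun i ↦ Finsupp.weight g (b i))
    (by simp) (by simp)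
  wlog hij : i < j generalizing i j
  · exact this j hj i hi hne.symm heq.symm (hne.lt_or_gt.resolve_left hij)
  have hj' : j ≤ Nat.card G := by simpa [Nat.lt_succ_iff] using hj
  have add_eq : (b j - b i) + b i = b j := tsub_add_cancel_of_le (mono hij.le)
  have degree_add : (b j - b i).degree + i = j := by
    simpa [degree_eq i (by lia), degree_eq j (by lia)] using congrArg Finsupp.degree add_eq
  have ne_zero : b j - b i ≠ 0 := by
    intro h
    rw [h, map_zero] at degree_add
    lia
  have weight_eq : Finsupp.weight g (b j - b i) = 0 := by
    rw [← add_eq, map_add] at heq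
    simpa using heq
  have a_le :=
    (mem_minimalZeroSums.1 ha).le_of_le ⟨ne_zero, weight_eq⟩ (tsub_le_self.trans (le_a j))
  have := Finsupp.degree_mono a_le
  lia

lemma eq_support_of_sum_eq_zero {g : ι → M} {a : ι →₀ ℕ} (ha : a ∈ minimalZeroSums g)
    {s : Finset ι} (hs : s ⊆ a.support) (nonempty : s.Nonempty) (hsum : ∑ i ∈ s, g i = 0) :
    s = a.support := by
  classical
  set b : ι →₀ ℕ := ∑ i ∈ s, Finsupp.single i 1 with hb
  have b_apply (i : ι) : b i = if i ∈ s then 1 else 0 := by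
    simp [hb, Finsupp.finsetSum_apply, Finsupp.single_apply]
  have b_ne : b ≠ 0 := by
    obtain ⟨i, hi⟩ := nonempty
    intro h
    simpa [h, hi] using b_apply i
  have b_weight : Finsupp.weight g b = 0 := by simpa [hb, Finsupp.weight_single] using hsum
  have b_le : b ≤ a := by
    intro i
    rw [b_apply]
    split_ifs with hi
    · exact Nat.one_le_iff_ne_zero.2 (Finsupp.mem_support_iff.1 (hs hi))
    · exact Nat.zero_le _
  refine hs.antisymm fun i hi ↦ by_contra fun his ↦ ?_
  have := (mem_minimalZeroSums.1 ha).le_of_le ⟨b_ne, b_weight⟩ b_le i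
  rw [b_apply, if_neg his] at this
  exact Finsupp.mem_support_iff.1 hi (by lia)

lemma zeroSumFree_image_erase_support [DecidableEq ι] [DecidableEq M] {g : ι → M}
    (hg : Function.Injective g) {a : ι →₀ ℕ} (ha : a ∈ minimalZeroSums g) {i : ι}
    (hi : i ∈ a.support) : ZeroSumFree ((a.support.erase i).image g) := by
  intro T hT nonempty hsum
  obtain ⟨s, hs, rfl⟩ := subset_image_iff.1 hT
  rw [sum_image hg.injOn] at hsum
  have hs' := coe_subset.1 hs
  have := eq_support_of_sum_eq_zero ha (hs'.trans (erase_subset _ _)) (image_nonempty.1 nonempty)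
    hsum
  exact notMem_erase i _ (hs' (this ▸ hi))

lemma exists_forall_card_support_le : ∃ c : ℝ, 0 ≤ c ∧
    ∀ (ι G : Type*) [AddCommGroup G] [Finite G] [IsAddCyclic G] (g : ι → G),
      Function.Injective g → ∀ a ∈ minimalZeroSums g, #a.support ≤ 6 * √(Nat.card G) + c := by
  classical
  obtain ⟨c, c_nonneg, hc⟩ := exists_forall_zeroSumFree_card_le
  refine ⟨c + 1, by positivity, fun ι G _ _ _ g hg a ha ↦ ?_⟩
  obtain ⟨i, hi⟩ := Finsupp.support_nonempty_iff.2 (mem_minimalZeroSums.1 ha).prop.1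
  have := hc G _ (zeroSumFree_image_erase_support hg ha hi)
  rw [card_image_of_injective _ hg] at this
  rw [← card_erase_add_one hi, Nat.cast_succ]
  linarith

lemma weight_option_elim (x : M) (w : ι → M) (m : Option ι →₀ ℕ) :
    Finsupp.weight (fun o ↦ Option.elim o x w) m = m none • x + Finsupp.weight w m.some :=
  Finsupp.linearCombination_option ..

section Residues

variable {w : ι → ℕ} {n : ℕ}

lemma weight_option_elim_neg_eq_zero_iff {m : Option ι →₀ ℕ} :
    Finsupp.weight (fun o ↦ Option.elim o (-(n : ℤ)) (fun i ↦ (w i : ℤ))) m = 0 ↔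
      Finsupp.weight w m.some = n * m none := by
  have : Finsupp.weight (fun i ↦ (w i : ℤ)) m.some = (Finsupp.weight w m.some : ℕ) :=
    (map_weight (Nat.castAddMonoidHom ℤ) w m.some).symm
  rw [weight_option_elim, this, smul_neg, neg_add_eq_zero, eq_comm, nsmul_eq_mul, mul_comm]
  exact_mod_cast Iff.rfl

lemma weight_natCast_zmod_eq_zero_iff {a : ι →₀ ℕ} :
    Finsupp.weight (fun i ↦ (w i : ZMod n)) a = 0 ↔ n ∣ Finsupp.weight w a := by
  rw [← ZMod.natCast_eq_zero_iff]
  exact Eq.congr_left (map_weight (Nat.castAddMonoidHom (ZMod n)) w a).symm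

lemma some_mem_minimalZeroSums (hn : n ≠ 0) {m : Option ι →₀ ℕ}
    (hm : m ∈ minimalZeroSums fun o ↦ Option.elim o (-(n : ℤ)) (fun i ↦ (w i : ℤ))) :
    m.some ∈ minimalZeroSums fun i ↦ (w i : ZMod n) := by
  obtain ⟨m_ne, m_weight⟩ := (mem_minimalZeroSums.1 hm).prop
  rw [weight_option_elim_neg_eq_zero_iff] at m_weight
  refine ⟨⟨fun h ↦ m_ne ?_, weight_natCast_zmod_eq_zero_iff.2 ⟨_, m_weight⟩⟩, ?_⟩
  · have none_eq : m none = 0 := by simpa [h, hn] using m_weight.symm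
    ext (_ | i)
    · exact none_eq
    · exact DFunLike.congr_fun h i
  · rintro b ⟨b_ne, b_weight⟩ b_le
    obtain ⟨q, hq⟩ := weight_natCast_zmod_eq_zero_iff.1 b_weight
    have q_le : q ≤ m none := by
      refine Nat.le_of_mul_le_mul_left ?_ (Nat.pos_of_ne_zero hn)
      rw [← hq, ← m_weight, ← tsub_add_cancel_of_le b_le, map_add]
      exact Nat.le_add_left _ _
    have lift_ne : b.optionElim q ≠ 0 := fun h ↦
      b_ne (by ext i; simpa using DFunLike.congr_fun h (some i))
    have lift_le : b.optionElim q ≤ m := by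
      rintro (_ | i)
      · simpa using q_le
      · simpa using b_le i
    have := (mem_minimalZeroSums.1 hm).le_of_le
      ⟨lift_ne, weight_option_elim_neg_eq_zero_iff.2 (by simpa using hq)⟩ lift_le
    exact fun i ↦ by simpa using this (some i)

lemma some_injOn_minimalZeroSums (hn : n ≠ 0) :
    Set.InjOn Finsupp.some
      (minimalZeroSums fun o ↦ Option.elim o (-(n : ℤ)) (fun i ↦ (w i : ℤ))) := by
  intro m hm m' hm' h
  have weight_eq := weight_option_elim_neg_eq_zero_iff.1 (mem_minimalZeroSums.1 hm).prop.2
  rw [h, weight_option_elim_neg_eq_zero_iff.1 (mem_minimalZeroSums.1 hm').prop.2] at weight_eq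
  ext (_ | i)
  · exact (Nat.eq_of_mul_eq_mul_left (Nat.pos_of_ne_zero hn) weight_eq).symm
  · exact DFunLike.congr_fun h i

lemma ncard_minimalZeroSums_option_elim_le [Finite ι] (hn : n ≠ 0) :
    (minimalZeroSums fun o ↦ Option.elim o (-(n : ℤ)) (fun i ↦ (w i : ℤ))).ncard ≤
      (minimalZeroSums fun i ↦ (w i : ZMod n)).ncard :=
  Set.ncard_le_ncard_of_injOn Finsupp.some (fun _ ↦ some_mem_minimalZeroSums hn)
    (some_injOn_minimalZeroSums hn) (finite_minimalZeroSums _)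

lemma injective_natCast_val_add_one (n : ℕ) :
    Function.Injective fun i : Fin n ↦ ((i + 1 : ℕ) : ZMod n) := fun i j h ↦
  Fin.ext <| ((ZMod.natCast_eq_natCast_iff _ _ n).1 h |>.add_right_cancel' 1).eq_of_lt_of_lt
    i.isLt j.isLt

end Residues

end MinimalZeroSums

section Counting

open Finset

variable {ι : Type*} [Fintype ι]

/- Rankin's trick: `y ^ #supp * x ^ degree` is multiplicative in the coordinates. -/
lemma card_mul_pow_mul_pow_le (A : Finset (ι →₀ ℕ)) {d s : ℕ} (degree_le : ∀ a ∈ A, a.degree ≤ d)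
    (card_le : ∀ a ∈ A, #a.support ≤ s) {x y : ℝ} (x_nonneg : 0 ≤ x) (x_lt : x < 1)
    (y_nonneg : 0 ≤ y) (y_le : y ≤ 1) :
    #A * (y ^ s * x ^ d) ≤ (1 + y * (x / (1 - x))) ^ Fintype.card ι := by
  classical
  let f : ℕ → ℝ := fun j ↦ (if j = 0 then 1 else y) * x ^ j
  have f_nonneg (j : ℕ) : 0 ≤ f j := by positivity
  have prod_eq (a : ι →₀ ℕ) : ∏ i, f (a i) = y ^ #a.support * x ^ a.degree := by
    simp only [f, prod_mul_distrib, prod_pow_eq_pow_sum, ← Finsupp.degree_eq_sum, prod_ite,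
      prod_const, one_pow, one_mul]
    congr
    ext i
    simp
  have sum_le : ∑ j ∈ range (d + 1), f j ≤ 1 + y * (x / (1 - x)) := by
    have geom_le : ∑ j ∈ range d, x ^ j ≤ (1 - x)⁻¹ := by
      rw [← tsum_geometric_of_lt_one x_nonneg x_lt]
      exact (summable_geometric_of_lt_one x_nonneg x_lt).sum_le_tsum _ fun _ _ ↦ by positivity
    calc ∑ j ∈ range (d + 1), f j
      _ = 1 + y * (x * ∑ j ∈ range d, x ^ j) := by
        simp [sum_range_succ', f, pow_succ', mul_sum, add_comm]
      _ ≤ 1 + y * (x / (1 - x)) := by rw [div_eq_mul_inv]; gcongr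
  calc #A * (y ^ s * x ^ d)
    _ ≤ ∑ a ∈ A, ∏ i, f (a i) := by
      rw [← nsmul_eq_mul]
      refine card_nsmul_le_sum _ _ _ fun a ha ↦ ?_
      rw [prod_eq]
      exact mul_le_mul (pow_le_pow_of_le_one y_nonneg y_le (card_le a ha))
        (pow_le_pow_of_le_one x_nonneg x_lt.le (degree_le a ha)) (by positivity) (by positivity)
    _ = ∑ a ∈ A.image (⇑Finsupp.equivFunOnFinite), ∏ i, f (a i) := by
      rw [sum_image Finsupp.equivFunOnFinite.injective.injOn]
      rfl
    _ ≤ ∑ a ∈ Fintype.piFinset fun _ : ι ↦ range (d + 1), ∏ i, f (a i) := by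
      refine sum_le_sum_of_subset_of_nonneg ?_ fun a _ _ ↦ prod_nonneg fun i _ ↦ f_nonneg _
      refine image_subset_iff.2 fun a ha ↦ Fintype.mem_piFinset.2 fun i ↦ mem_range_succ_iff.2 ?_
      exact (Finsupp.le_degree i a).trans (degree_le a ha)
    _ = (∑ j ∈ range (d + 1), f j) ^ Fintype.card ι := by
      rw [← prod_univ_sum, prod_const, card_univ]
    _ ≤ (1 + y * (x / (1 - x))) ^ Fintype.card ι :=
      pow_le_pow_left₀ (sum_nonneg fun j _ ↦ f_nonneg j) sum_le _

lemma card_le_pow_mul_exp {n : ℕ} (hn : n ≠ 0) (hι : Fintype.card ι ≤ n) (A : Finset (ι →₀ ℕ))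
    {s : ℕ} (degree_le : ∀ a ∈ A, a.degree ≤ n) (card_le : ∀ a ∈ A, #a.support ≤ s) :
    #A ≤ (n : ℝ) ^ s * Real.exp (2 * √n) := by
  have n_pos : (0 : ℝ) < n := by positivity
  set r := √(n : ℝ)
  have r_pos : 0 < r := Real.sqrt_pos.2 n_pos
  have n_eq : (n : ℝ) = r * r := (Real.mul_self_sqrt n_pos.le).symm
  set x := r / (r + 1) with hx
  have odds_eq : x / (1 - x) = r := by
    rw [hx, one_sub_div (by positivity), add_sub_cancel_left]
    field_simp
  have x_lt : x < 1 := by rw [hx, div_lt_one (by positivity)]; linarith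
  have rankin := card_mul_pow_mul_pow_le A degree_le card_le (by positivity) x_lt
    (inv_nonneg.2 n_pos.le) (Nat.cast_inv_le_one n)
  have right_le : (1 + (n : ℝ)⁻¹ * (x / (1 - x))) ^ Fintype.card ι ≤ Real.exp r :=
    calc (1 + (n : ℝ)⁻¹ * (x / (1 - x))) ^ Fintype.card ι
      _ ≤ (Real.exp ((n : ℝ)⁻¹ * r)) ^ n := by
        rw [odds_eq]
        refine (pow_le_pow_right₀ (le_add_of_nonneg_right (by positivity)) hι).trans ?_
        gcongr
        linarith [Real.add_one_le_exp ((n : ℝ)⁻¹ * r)]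
      _ = Real.exp r := by
        rw [← Real.exp_nat_mul, mul_inv_cancel_left₀ n_pos.ne']
  have inv_le : (x ^ n)⁻¹ ≤ Real.exp r :=
    calc (x ^ n)⁻¹
      _ = (r⁻¹ + 1) ^ n := by
        rw [← inv_pow, hx, inv_div, add_div, div_self r_pos.ne', one_div, add_comm]
      _ ≤ (Real.exp r⁻¹) ^ n := by gcongr; exact Real.add_one_le_exp _
      _ = Real.exp r := by
        rw [← Real.exp_nat_mul, n_eq, mul_inv_cancel_right₀ r_pos.ne']
  calc (#A : ℝ)
    _ = #A * ((n : ℝ)⁻¹ ^ s * x ^ n) * ((n : ℝ) ^ s * (x ^ n)⁻¹) := by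
      rw [inv_pow, mul_assoc, mul_mul_mul_comm, inv_mul_cancel₀ (by positivity),
        mul_inv_cancel₀ (by positivity), one_mul, mul_one]
    _ ≤ Real.exp r * ((n : ℝ) ^ s * Real.exp r) := by
      gcongr
      exact rankin.trans right_le
    _ = (n : ℝ) ^ s * Real.exp (2 * r) := by
      rw [two_mul, Real.exp_add]
      ring

lemma exists_forall_ncard_minimalZeroSums_le : ∃ c : ℝ, 0 ≤ c ∧
    ∀ (ι G : Type*) [AddCommGroup G] [Finite G] [IsAddCyclic G] (g : ι → G),
      Function.Injective g → ((minimalZeroSums g).ncard : ℝ) ≤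
        Real.exp ((6 * √(Nat.card G) + c) * Real.log (Nat.card G) + 2 * √(Nat.card G)) := by
  obtain ⟨c, c_nonneg, hc⟩ := exists_forall_card_support_le
  refine ⟨c, c_nonneg, fun ι G _ _ _ g hg ↦ ?_⟩
  have := Finite.of_injective g hg
  cases nonempty_fintype ι
  set N := Nat.card G
  have N_pos : 0 < N := Nat.card_pos
  have one_le_N : (1 : ℝ) ≤ N := by exact_mod_cast N_pos
  have card_ι_le : Fintype.card ι ≤ N :=
    Fintype.card_eq_nat_card.trans_le (Nat.card_le_card_of_injective g hg)
  have count := card_le_pow_mul_exp N_pos.ne' card_ι_le (finite_minimalZeroSums g).toFinset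
    (s := ⌊6 * √N + c⌋₊)
    (fun a ha ↦ degree_le_natCard_of_mem_minimalZeroSums (by simpa using ha))
    (fun a ha ↦ Nat.le_floor (hc ι G g hg a (by simpa using ha)))
  rw [← Set.ncard_eq_toFinset_card _ (finite_minimalZeroSums g)] at count
  refine count.trans ?_
  rw [Real.exp_add, mul_comm _ (Real.log _), ← Real.rpow_def_of_pos (by positivity),
    ← Real.rpow_natCast]
  gcongr
  exact Nat.floor_le (by positivity)

lemma exists_forall_add_mul_log_add_sqrt_le {c : ℝ} (hc : 0 ≤ c) : ∃ K, ∀ x : ℝ, 0 < x →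
    (6 * √x + c) * Real.log x + 2 * √x ≤ K + 6 * √x * Real.log (2 * x) := by
  refine ⟨c * (2 * Real.log (2 / (2 / (c + 1))) - 2), fun x hx ↦ ?_⟩
  have log_le := mul_le_mul_of_nonneg_left
    (log_le_mul_sqrt_add (ε := 2 / (c + 1)) (by positivity) hx) hc
  have sqrt_le : c * (2 / (c + 1) * √x) ≤ 2 * √x := by
    rw [← mul_assoc]
    gcongr
    rw [mul_div_assoc', div_le_iff₀ (by positivity)]
    linarith
  have log_two : 4 * √x ≤ 6 * √x * Real.log 2 := by
    nlinarith [Real.log_two_gt_d9, Real.sqrt_nonneg x]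
  rw [Real.log_mul two_ne_zero hx.ne']
  linarith

end Counting

section Invariants

variable {ι : Type}

lemma prod_zpow_pow_eq_zpow_weight {G : Type*} [CommGroup G] (t : G) (w : ι → ℤ) (m : ι →₀ ℕ) :
    m.prod (fun i e ↦ (t ^ w i) ^ e) = t ^ Finsupp.weight w m := by
  induction m using Finsupp.induction_linear with
  | zero => simp
  | add m m' hm hm' =>
    rw [Finsupp.prod_add_index' (by simp) (by simp [pow_add]), hm, hm', map_add, zpow_add]
  | single i e => simp [Finsupp.weight_single, zpow_mul', ← zpow_natCast]

variable {k}

lemma torusAct_monomial (w : ι → ℤ) (t : kˣ) (m : ι →₀ ℕ) (c : k) :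
    torusAct k w t (monomial m c) = monomial m (((t ^ Finsupp.weight w m : kˣ) : k) * c) := by
  rw [torusAct, aeval_monomial, ← prod_zpow_pow_eq_zpow_weight, monomial_eq, algebraMap_eq]
  simp only [Finsupp.prod, smul_eq_C_mul, mul_pow, Finset.prod_mul_distrib, Units.coe_prod,
    Units.val_pow_eq_pow_val, map_mul, map_prod, map_pow]
  ring

lemma coeff_torusAct (w : ι → ℤ) (t : kˣ) (p : MvPolynomial ι k) (m : ι →₀ ℕ) :
    coeff m (torusAct k w t p) = ((t ^ Finsupp.weight w m : kˣ) : k) * coeff m p := by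
  classical
  induction p using MvPolynomial.induction_on' with
  | monomial u c =>
    rw [torusAct_monomial, coeff_monomial, coeff_monomial]
    split_ifs with h
    · rw [h]
    · rw [mul_zero]
  | add p q hp hq => rw [map_add, coeff_add, coeff_add, hp, hq, mul_add]

lemma exists_unit_zpow_ne_one [Infinite k] {d : ℤ} (hd : d ≠ 0) : ∃ t : kˣ, t ^ d ≠ 1 := by
  have : NeZero d.natAbs := ⟨Int.natAbs_ne_zero.2 hd⟩
  have : Infinite kˣ :=
    unitsEquivNeZero.infinite_iff.2 (Set.finite_singleton (0 : k)).infinite_compl.to_subtype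
  have roots_finite : (rootsOfUnity d.natAbs k : Set kˣ).Finite :=
    Set.finite_coe_iff.1 (inferInstanceAs (Finite (rootsOfUnity d.natAbs k)))
  obtain ⟨t, ht⟩ := roots_finite.exists_notMem
  exact ⟨t, fun h ↦ ht (by simpa [mem_rootsOfUnity] using h)⟩

lemma mem_torusInv_iff [Infinite k] {w : ι → ℤ} {p : MvPolynomial ι k} :
    p ∈ torusInv k w ↔ IsWeightedHomogeneous w p 0 := by
  refine ⟨fun hp m hm ↦ by_contra fun weight_ne ↦ ?_, fun hp t ↦ ?_⟩
  · obtain ⟨t, ht⟩ := exists_unit_zpow_ne_one (k := k) weight_ne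
    have coeff_eq := coeff_torusAct w t p m
    rw [hp t] at coeff_eq
    exact ht (Units.ext ((right_eq_mul₀ hm).1 coeff_eq))
  · ext m
    rw [coeff_torusAct]
    by_cases hm : coeff m p = 0
    · simp [hm]
    · simp [hp hm]

lemma monomial_mem_adjoin_minimalZeroSums {R M : Type*} [CommSemiring R] [AddCommMonoid M]
    {w : ι → M} (m : ι →₀ ℕ) (hm : Finsupp.weight w m = 0) :
    monomial m (1 : R) ∈ Algebra.adjoin R ((monomial · (1 : R)) '' minimalZeroSums w) := by
  induction m using WellFoundedLT.induction with
  | ind m ih =>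
  by_cases m_zero : m = 0
  · rw [m_zero]
    exact one_mem _
  by_cases m_min : m ∈ minimalZeroSums w
  · exact Algebra.subset_adjoin ⟨m, m_min, rfl⟩
  obtain ⟨b, hlt, b_ne, b_weight⟩ := (not_minimal_iff_exists_lt ⟨m_zero, hm⟩).1
    (mem_minimalZeroSums.not.1 m_min)
  have sub_add : m - b + b = m := tsub_add_cancel_of_le hlt.le
  have sub_lt : m - b < m :=
    tsub_le_self.lt_of_ne fun h ↦ b_ne (by simpa [h] using sub_add)
  have sub_weight : Finsupp.weight w (m - b) = 0 := by
    simpa [hm, b_weight] using congrArg (Finsupp.weight w) sub_add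
  have := mul_mem (ih _ sub_lt sub_weight) (ih b hlt b_weight)
  rwa [monomial_mul, sub_add, one_mul] at this

lemma torusInv_eq_adjoin [Infinite k] (w : ι → ℤ) :
    torusInv k w = Algebra.adjoin k ((monomial · (1 : k)) '' minimalZeroSums w) := by
  refine le_antisymm (fun p hp ↦ ?_) (Algebra.adjoin_le ?_)
  · rw [p.as_sum]
    refine sum_mem fun m hm ↦ ?_
    have := monomial_mem_adjoin_minimalZeroSums (R := k) m
      (mem_torusInv_iff.1 hp (mem_support_iff.1 hm))
    simpa [smul_monomial] using Subalgebra.smul_mem _ this (coeff m p)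
  · rintro _ ⟨m, hm, rfl⟩
    exact mem_torusInv_iff.2
      (isWeightedHomogeneous_monomial w m 1 (mem_minimalZeroSums.1 hm).prop.2)

lemma minGens_torusInv_le_ncard [Infinite k] [Finite ι] (w : ι → ℤ) :
    minGens k (torusInv k w) ≤ (minimalZeroSums w).ncard := by
  classical
  refine le_trans (Nat.sInf_le
    ⟨(finite_minimalZeroSums w).toFinset.image (monomial · (1 : k)), rfl, ?_⟩) ?_
  · simp [torusInv_eq_adjoin]
  · rw [Set.ncard_eq_toFinset_card _ (finite_minimalZeroSums w)]
    exact Finset.card_image_le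

end Invariants

theorem torus_invariants_minGens_bound_general [Infinite k] :
    ∃ C : ℝ, ∀ n : ℕ, 1 ≤ n →
      (minGens k (torusInv k (wOpt n)) : ℝ) ≤
        C * Real.exp (6 * Real.sqrt n * Real.log (2 * n)) := by
  obtain ⟨c, c_nonneg, ncard_le⟩ := exists_forall_ncard_minimalZeroSums_le
  obtain ⟨K, exponent_le⟩ := exists_forall_add_mul_log_add_sqrt_le c_nonneg
  refine ⟨Real.exp K, fun n hn ↦ ?_⟩
  have : NeZero n := ⟨by lia⟩
  calc (minGens k (torusInv k (wOpt n)) : ℝ)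
    _ ≤ ((minimalZeroSums (wOpt n)).ncard : ℝ) := by
      exact_mod_cast minGens_torusInv_le_ncard (wOpt n)
    _ ≤ ((minimalZeroSums fun i : Fin n ↦ ((i + 1 : ℕ) : ZMod n)).ncard : ℝ) := by
      exact_mod_cast ncard_minimalZeroSums_option_elim_le (NeZero.ne n)
    _ ≤ Real.exp ((6 * √n + c) * Real.log n + 2 * √n) := by
      simpa using ncard_le (Fin n) (ZMod n) _ (injective_natCast_val_add_one n)
    _ ≤ Real.exp (K + 6 * √n * Real.log (2 * n)) :=
      Real.exp_le_exp.2 (exponent_le n (by positivity))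
    _ = Real.exp K * Real.exp (6 * √n * Real.log (2 * n)) := Real.exp_add _ _

/-- Let `T = k*` act on `k[x_1, …, x_n, x_{-n}]` with `t · x_i = t^i x_i`.  Then the
cardinality of a minimal generating set of the invariant ring `k[x_1,…,x_n,x_{-n}]^T`
is `O(e^{6√n · log(2n)})`. -/
theorem torus_invariants_minGens_bound [IsAlgClosed k] :
    ∃ C : ℝ, ∀ n : ℕ, 1 ≤ n →
      (minGens k (torusInv k (wOpt n)) : ℝ) ≤
        C * Real.exp (6 * Real.sqrt n * Real.log (2 * n)) :=
  haveI : Infinite k := IsAlgClosed.instInfinite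
  torus_invariants_minGens_bound_general k
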